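/- Let {N(μ, I_n) : μ ∈ ℝⁿ} be the Gaussian shift family on ℝⁿ with P_0 = N(0, I_n). Then the linear span of the likelihood ratios x ↦ exp(μᵀx − |μ|²/2), μ ∈ ℝⁿ, is dense in L¹(ℝⁿ, N(0, I_n)). -/

import Mathlib

open MeasureTheory Real

/-- The standard Gaussian measure `N(0, I_n)` on `ℝⁿ`. -/
noncomputable def stdGaussian (n : ℕ) : Measure (Fin n → ℝ) :=
  volume.withDensity fun x =>
    ENNReal.ofReal ((2 * π) ^ (-(n : ℝ) / 2) * Real.exp (-(∑ i, x i ^ 2) / 2))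

/-!
If `h ∈ L²(μ)` is orthogonal to every `exp L` with `L` a continuous linear form, then the finite
measures `h⁺ μ` and `h⁻ μ` have the same Laplace transform. Where it is finite, the Laplace
transform continues analytically to the imaginary axis, so the two measures have the same
characteristic function; hence they coincide and `h = 0` almost everywhere. Thus the exponentials
span a dense subspace of `L²(μ)`, and `L²(μ)` is dense in `Lᵖ(μ)` for `p ≤ 2`.
-/

open scoped ENNReal

section MeasureSpace

variable {α : Type*} [MeasurableSpace α] {μ : Measure α}

lemma integrable_withDensity_ofReal {h φ : α → ℝ} (hh : AEMeasurable h μ)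
    (hφ : AEStronglyMeasurable φ μ) (hφh : Integrable (fun x => φ x * h x) μ) :
    Integrable φ (μ.withDensity fun x => ENNReal.ofReal (h x)) := by
  rw [integrable_withDensity_iff_integrable_smul₀' hh.ennreal_ofReal (by simp)]
  refine hφh.mono (hh.ennreal_ofReal.ennreal_toReal.aestronglyMeasurable.smul hφ) (.of_forall ?_)
  intro x
  have hle : |max (h x) 0| ≤ |h x| := abs_max_le_max_abs_abs.trans (by simp)
  simpa [ENNReal.toReal_ofReal', mul_comm] using mul_le_mul_of_nonneg_left hle (abs_nonneg (φ x))

lemma integral_withDensity_ofReal_sub_integral_withDensity_ofReal_neg {h φ : α → ℝ}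
    (hh : AEMeasurable h μ) (hφ : AEStronglyMeasurable φ μ)
    (hφh : Integrable (fun x => φ x * h x) μ) :
    ∫ x, φ x ∂(μ.withDensity fun x => ENNReal.ofReal (h x))
      - ∫ x, φ x ∂(μ.withDensity fun x => ENNReal.ofReal (-h x)) = ∫ x, φ x * h x ∂μ := by
  have hh' : AEMeasurable (fun x => -h x) μ := hh.neg
  have hpos := integrable_withDensity_ofReal hh hφ hφh
  have hneg := integrable_withDensity_ofReal hh' hφ (by simpa using hφh.neg)
  rw [integrable_withDensity_iff_integrable_smul₀' hh.ennreal_ofReal (by simp)] at hpos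
  rw [integrable_withDensity_iff_integrable_smul₀' hh'.ennreal_ofReal (by simp)] at hneg
  rw [integral_withDensity_eq_integral_toReal_smul₀ hh.ennreal_ofReal (by simp),
    integral_withDensity_eq_integral_toReal_smul₀ hh'.ennreal_ofReal (by simp),
    ← integral_sub hpos hneg]
  refine integral_congr_ae (.of_forall fun x => ?_)
  simp only [ENNReal.toReal_ofReal', smul_eq_mul]
  rw [← sub_mul, max_zero_sub_max_neg_zero_eq_self, mul_comm]

lemma ae_eq_zero_of_withDensity_ofReal_eq_neg {h : α → ℝ} (hh : Integrable h μ)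
    (heq : μ.withDensity (fun x => ENNReal.ofReal (h x))
      = μ.withDensity fun x => ENNReal.ofReal (-h x)) : h =ᵐ[μ] 0 := by
  have hae : (fun x => ENNReal.ofReal (h x)) =ᵐ[μ] fun x => ENNReal.ofReal (-h x) :=
    (withDensity_eq_iff hh.aemeasurable.ennreal_ofReal
      hh.aemeasurable.neg.ennreal_ofReal hh.lintegral_lt_top.ne).1 heq
  filter_upwards [hae] with x hx
  have hmax : max (h x) 0 = max (-h x) 0 := by
    simpa only [ENNReal.toReal_ofReal'] using congrArg ENNReal.toReal hx
  rw [← max_zero_sub_max_neg_zero_eq_self (h x), hmax, sub_self, Pi.zero_apply]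

lemma integral_abs_lt_of_eLpNorm_one_lt {u : α → ℝ} {ε : ℝ}
    (hu : eLpNorm u 1 μ < ENNReal.ofReal ε) : ∫ x, |u x| ∂μ < ε := by
  refine (le_abs_self _).trans_lt (ENNReal.toReal_lt_of_lt_ofReal (a := ‖∫ x, |u x| ∂μ‖ₑ) ?_)
  calc ‖∫ x, |u x| ∂μ‖ₑ ≤ ∫⁻ x, ‖|u x|‖ₑ ∂μ := enorm_integral_le_lintegral_enorm _
    _ = eLpNorm u 1 μ := by simp only [enorm_abs, eLpNorm_one_eq_lintegral_enorm]
    _ < ENNReal.ofReal ε := hu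

lemma exists_mem_eLpNorm_two_sub_lt_of_orthogonal {𝕜 F : Type*} [RCLike 𝕜]
    [NormedAddCommGroup F] [InnerProductSpace 𝕜 F] [CompleteSpace F] {S : Submodule 𝕜 (α → F)}
    (hS : ∀ g ∈ S, MemLp g 2 μ)
    (horth : ∀ h : α → F, MemLp h 2 μ → (∀ g ∈ S, ∫ x, inner 𝕜 (g x) (h x) ∂μ = 0) → h =ᵐ[μ] 0)
    {f : α → F} (hf : MemLp f 2 μ) {ε : ℝ≥0∞} (hε : ε ≠ 0) :
    ∃ g ∈ S, eLpNorm (f - g) 2 μ < ε := by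
  let toL2 : S →ₗ[𝕜] Lp F 2 μ :=
    { toFun g := (hS g g.2).toLp
      map_add' _ _ := rfl
      map_smul' _ _ := rfl }
  have hdense : toL2.range.topologicalClosure = ⊤ := by
    rw [Submodule.topologicalClosure_eq_top_iff, Submodule.eq_bot_iff]
    intro h hh
    refine (Lp.eq_zero_iff_ae_eq_zero).2 (horth h (Lp.memLp h) fun g hg => ?_)
    rw [← (Submodule.mem_orthogonal _ _).1 hh _ ⟨⟨g, hg⟩, rfl⟩, L2.inner_def]
    refine integral_congr_ae ?_
    filter_upwards [(hS g hg).coeFn_toLp] with x hx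
    rw [← hx]
    rfl
  have hmem : hf.toLp ∈ toL2.range.topologicalClosure := hdense ▸ Submodule.mem_top
  obtain ⟨_, ⟨⟨g, hg⟩, rfl⟩, hfg⟩ := EMetric.mem_closure_iff.1 hmem ε hε.bot_lt
  exact ⟨g, hg, by rwa [← Lp.edist_toLp_toLp f g hf (hS g hg)]⟩

lemma exists_eLpNorm_le_mul_eLpNorm_of_exponent_le (μ : Measure α) [IsFiniteMeasure μ]
    (F : Type*) [NormedAddCommGroup F] {p q : ℝ≥0∞} (hpq : p ≤ q) :
    ∃ C : ℝ≥0∞, C ≠ ∞ ∧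
      ∀ u : α → F, AEStronglyMeasurable u μ → eLpNorm u p μ ≤ C * eLpNorm u q μ := by
  rcases eq_or_ne p 0 with rfl | hp
  · exact ⟨0, by simp⟩
  · have hexponent : 0 ≤ 1 / p.toReal - 1 / q.toReal := by
      rcases eq_or_ne q ∞ with rfl | hq
      · simp
      · exact sub_nonneg.2 (one_div_le_one_div_of_le
          (ENNReal.toReal_pos hp (ne_top_of_le_ne_top hq hpq)) (ENNReal.toReal_mono hq hpq))
    exact ⟨_, ENNReal.rpow_ne_top_of_nonneg hexponent (measure_ne_top μ Set.univ), fun _ hu =>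
      (eLpNorm_le_eLpNorm_mul_rpow_measure_univ hpq hu).trans_eq (mul_comm _ _)⟩

lemma exists_mem_eLpNorm_sub_lt_of_exponent_le [IsFiniteMeasure μ] {F : Type*}
    [NormedAddCommGroup F] {S : Set (α → F)} {p q : ℝ≥0∞} (hpq : p ≤ q) (hp : p ≠ ∞)
    (hS : ∀ g ∈ S, AEStronglyMeasurable g μ)
    (happrox : ∀ f : α → F, MemLp f q μ → ∀ ε : ℝ≥0∞, ε ≠ 0 → ∃ g ∈ S, eLpNorm (f - g) q μ < ε)
    {f : α → F} (hf : MemLp f p μ) {ε : ℝ≥0∞} (hε : ε ≠ 0) :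
    ∃ g ∈ S, eLpNorm (f - g) p μ < ε := by
  obtain ⟨η, hη, hadd⟩ := exists_Lp_half F μ p hε
  obtain ⟨s, hfs, hs⟩ := hf.exists_simpleFunc_eLpNorm_sub_lt hp hη.ne'
  obtain ⟨C, hC, hle⟩ := exists_eLpNorm_le_mul_eLpNorm_of_exponent_le μ F hpq
  obtain ⟨g, hg, hsg⟩ := happrox s (s.memLp_of_isFiniteMeasure q μ) (η / C)
    (ENNReal.div_pos hη.ne' hC).ne'
  have hsg_meas : AEStronglyMeasurable (⇑s - g) μ := hs.1.sub (hS g hg)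
  have hsg' : eLpNorm (⇑s - g) p μ ≤ η :=
    calc eLpNorm (⇑s - g) p μ ≤ C * eLpNorm (⇑s - g) q μ := hle _ hsg_meas
      _ ≤ C * (η / C) := by gcongr
      _ ≤ η := ENNReal.mul_div_le
  refine ⟨g, hg, ?_⟩
  rw [← sub_add_sub_cancel f s g]
  exact hadd _ _ (hf.1.sub hs.1) hsg_meas hfs.le hsg'

lemma memLp_two_exp_sub_const {X : α → ℝ} (hX : AEMeasurable X μ)
    (hX2 : Integrable (fun x => exp (2 * X x)) μ) (c : ℝ) :
    MemLp (fun x => exp (X x - c)) 2 μ := by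
  have hexp : MemLp (fun x => exp (X x)) 2 μ := by
    refine (memLp_two_iff_integrable_sq hX.exp.aestronglyMeasurable).2 ?_
    simpa [← exp_nat_mul] using hX2
  simpa only [exp_sub, div_eq_mul_inv] using hexp.mul_const (exp c)⁻¹

end MeasureSpace

section Exponentials

open ProbabilityTheory

variable {E : Type*} [NormedAddCommGroup E] [NormedSpace ℝ E] [MeasurableSpace E]
  [BorelSpace E] [SecondCountableTopology E] [CompleteSpace E]

lemma measure_ext_of_mgf_strongDual {P Q : Measure E} [IsFiniteMeasure P] [IsFiniteMeasure Q]
    (hint : ∀ L : StrongDual ℝ E, 0 ∈ interior (integrableExpSet L P))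
    (hmgf : ∀ L : StrongDual ℝ E, mgf L P = mgf L Q) : P = Q := by
  have hmass : P.real Set.univ = Q.real Set.univ := by
    simpa only [mgf_zero'] using congrFun (hmgf 0) 0
  have hzero : P = 0 ↔ Q = 0 := by
    rw [← Measure.measure_univ_eq_zero, ← measureReal_eq_zero_iff, hmass,
      measureReal_eq_zero_iff, Measure.measure_univ_eq_zero]
  refine Measure.ext_of_charFunDual (funext fun L => ?_)
  have hL (R : Measure E) : charFunDual R L = complexMGF L R Complex.I := by
    simpa [charFunDual_eq_charFun_map_one] using
      (complexMGF_mul_I (L.continuous.measurable.aemeasurable (μ := R)) 1).symm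
  rw [hL, hL]
  exact eqOn_complexMGF_of_mgf' (hmgf L) hzero (by simpa using hint L)

lemma ae_eq_zero_of_forall_integral_exp_mul_eq_zero {μ : Measure E} {h : E → ℝ}
    (hint : ∀ L : StrongDual ℝ E, Integrable (fun x => exp (L x) * h x) μ)
    (hzero : ∀ L : StrongDual ℝ E, ∫ x, exp (L x) * h x ∂μ = 0) : h =ᵐ[μ] 0 := by
  have hh : Integrable h μ := by simpa using hint 0
  have hexp (L : StrongDual ℝ E) : AEStronglyMeasurable (fun x => exp (L x)) μ := by fun_prop
  have : IsFiniteMeasure (μ.withDensity fun x => ENNReal.ofReal (h x)) :=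
    isFiniteMeasure_withDensity_ofReal hh.2
  have : IsFiniteMeasure (μ.withDensity fun x => ENNReal.ofReal (-h x)) :=
    isFiniteMeasure_withDensity_ofReal hh.neg.2
  refine ae_eq_zero_of_withDensity_ofReal_eq_neg hh (measure_ext_of_mgf_strongDual ?_ ?_)
  · intro L
    have huniv : integrableExpSet L (μ.withDensity fun x => ENNReal.ofReal (h x)) = Set.univ :=
      Set.eq_univ_of_forall fun t =>
        integrable_withDensity_ofReal hh.aemeasurable (hexp (t • L)) (hint (t • L))
    simp [huniv]
  · refine fun L => funext fun t => sub_eq_zero.1 ?_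
    exact (integral_withDensity_ofReal_sub_integral_withDensity_ofReal_neg hh.aemeasurable
      (hexp (t • L)) (hint (t • L))).trans (hzero (t • L))

/-- For `a L = log ∫ x, exp (L x) ∂μ` the functions `exp (L x - a L)` are the likelihood ratios,
with respect to `μ`, of the natural exponential family generated by `μ`. -/
theorem gaussian_likelihood_ratios_span_dense_general {μ : Measure E}
    (hμ : ∀ L : StrongDual ℝ E, Integrable (fun x => exp (L x)) μ) (a : StrongDual ℝ E → ℝ)
    {p : ℝ≥0∞} (hp : p ≤ 2) {f : E → ℝ} (hf : MemLp f p μ) {ε : ℝ≥0∞} (hε : ε ≠ 0) :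
    ∃ g ∈ Submodule.span ℝ (Set.range fun (L : StrongDual ℝ E) (x : E) => exp (L x - a L)),
      eLpNorm (f - g) p μ < ε := by
  have : IsFiniteMeasure μ :=
    (integrable_const_iff_isFiniteMeasure one_ne_zero).1 (by simpa using hμ 0)
  have hexp (L : StrongDual ℝ E) (c : ℝ) : MemLp (fun x => exp (L x - c)) 2 μ :=
    memLp_two_exp_sub_const L.continuous.measurable.aemeasurable
      (by simpa using hμ ((2 : ℝ) • L)) c
  set S := Submodule.span ℝ (Set.range fun (L : StrongDual ℝ E) (x : E) => exp (L x - a L))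
  have hS : ∀ g ∈ S, MemLp g 2 μ := fun g hg => by
    induction hg using Submodule.span_induction with
    | mem _ hg => obtain ⟨L, rfl⟩ := hg; exact hexp L (a L)
    | zero => exact MemLp.zero
    | add _ _ _ _ hg hg' => exact hg.add hg'
    | smul c _ _ hg => exact hg.const_smul c
  refine exists_mem_eLpNorm_sub_lt_of_exponent_le hp (ne_top_of_le_ne_top ENNReal.ofNat_ne_top hp)
    (fun g hg => (hS g hg).1) (fun u hu δ hδ => ?_) hf hε
  refine exists_mem_eLpNorm_two_sub_lt_of_orthogonal hS (fun h hh horth => ?_) hu hδ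
  refine ae_eq_zero_of_forall_integral_exp_mul_eq_zero (fun L => ?_) fun L => ?_
  · simpa using! (hexp L 0).integrable_mul hh
  · have hL := horth _ (Submodule.subset_span ⟨L, rfl⟩)
    have hmul (x : E) : inner ℝ (exp (L x - a L)) (h x) = exp (L x) * h x / exp (a L) := by
      rw [Real.inner_apply, exp_sub, div_mul_eq_mul_div]
    simpa only [hmul, integral_div, div_eq_zero_iff, exp_ne_zero, or_false] using hL

end Exponentials

lemma strongDual_pi_apply_eq_sum {ι : Type*} [Fintype ι] [DecidableEq ι]
    (L : StrongDual ℝ (ι → ℝ)) (x : ι → ℝ) : L x = ∑ i, L (Pi.single i 1) * x i := by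
  conv_lhs => rw [pi_eq_sum_univ' x]
  simp [mul_comm]

lemma integrable_exp_strongDual_stdGaussian (n : ℕ) (L : StrongDual ℝ (Fin n → ℝ)) :
    Integrable (fun x => exp (L x)) (stdGaussian n) := by
  unfold stdGaussian
  rw [integrable_withDensity_iff_integrable_smul' (by fun_prop) (by simp)]
  have hgauss := (GaussianFourier.integrable_cexp_neg_mul_sum_add (b := (1 / 2 : ℂ)) (by norm_num)
    fun i : Fin n => (L (Pi.single i 1) : ℂ)).norm.const_mul ((2 * π) ^ (-(n : ℝ) / 2))
  refine hgauss.congr (.of_forall fun x => ?_)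
  have hexponent : -(1 / 2 : ℂ) * ∑ i, (x i : ℂ) ^ 2 + ∑ i, (L (Pi.single i 1) : ℂ) * x i
      = (-(∑ i, x i ^ 2) / 2 + L x : ℝ) := by
    rw [strongDual_pi_apply_eq_sum L x]
    push_cast
    ring
  simp only [smul_eq_mul]
  rw [ENNReal.toReal_ofReal (by positivity), hexponent, Complex.norm_exp_ofReal, exp_add, mul_assoc]

/-- The linear span of the Gaussian shift likelihood ratios
`x ↦ exp(μᵀx − |μ|²/2)` is dense in `L¹(ℝⁿ, N(0, I_n))`. -/
theorem gaussian_likelihood_ratios_span_dense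
    (n : ℕ) (f : (Fin n → ℝ) → ℝ) (hf : Integrable f (stdGaussian n))
    (ε : ℝ) (hε : 0 < ε) :
    ∃ g ∈ Submodule.span ℝ
      {h : (Fin n → ℝ) → ℝ | ∃ μ : Fin n → ℝ,
        h = fun x => Real.exp (∑ i, μ i * x i - (∑ i, μ i ^ 2) / 2)},
      ∫ x, |f x - g x| ∂(stdGaussian n) < ε := by
  obtain ⟨g, hg, hfg⟩ := gaussian_likelihood_ratios_span_dense_general
    (integrable_exp_strongDual_stdGaussian n) (fun L => (∑ i, L (Pi.single i 1) ^ 2) / 2)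
    one_le_two (memLp_one_iff_integrable.2 hf) (ENNReal.ofReal_pos.2 hε).ne'
  refine ⟨g, Submodule.span_mono ?_ hg, integral_abs_lt_of_eLpNorm_one_lt hfg⟩
  rintro _ ⟨L, rfl⟩
  exact ⟨fun i => L (Pi.single i 1), funext fun x =>
    congrArg (fun y => exp (y - _)) (strongDual_pi_apply_eq_sum L x)⟩
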